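/- A coalgebra morphism f : C → D is injective if and only if its restriction to the first term C_{(1)} of the coradical filtration is injective. -/

import Mathlib

open TensorProduct

variable (k : Type*) [Field k]
variable (C : Type*) [AddCommGroup C] [Module k C] [Coalgebra k C]

/-- The image of `D ⊗ E` inside `C ⊗ C`, for submodules `D E : Submodule k C`. -/
noncomputable def tensorSub (D E : Submodule k C) : Submodule k (C ⊗[k] C) :=
  LinearMap.range (TensorProduct.map D.subtype E.subtype)

/-- A submodule `D ⊆ C` is a subcoalgebra if `Δ(D) ⊆ D ⊗ D`. -/
def IsSubcoalgebra (D : Submodule k C) : Prop :=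
  ∀ x ∈ D, Coalgebra.comul (R := k) x ∈ tensorSub k C D D

/-- The coradical of `C`: the sum of all simple subcoalgebras. -/
def coradical : Submodule k C :=
  sSup {D | IsSubcoalgebra k C D ∧ D ≠ ⊥ ∧
    ∀ E ≤ D, IsSubcoalgebra k C E → E = ⊥ ∨ E = D}

/-- The coradical filtration `C_(0) ⊆ C_(1) ⊆ ⋯`, with
`C_(n) = Δ⁻¹(C ⊗ C_(n-1) + C_(0) ⊗ C)`. -/
noncomputable def coradFilt : ℕ → Submodule k C
  | 0 => coradical k C
  | n+1 => Submodule.comap (Coalgebra.comul (R := k))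
      (tensorSub k C ⊤ (coradFilt n) ⊔ tensorSub k C (coradical k C) ⊤)

theorem exists_maximal_isTwoSided_notMem_of_isSemisimpleRing {R : Type*} [Ring R]
    [IsSemisimpleRing R] {r : R} (hr : r ≠ 0) :
    ∃ P : Ideal R, P.IsTwoSided ∧ P ≠ ⊤ ∧ r ∉ P ∧
      ∀ Q : Ideal R, Q.IsTwoSided → P ≤ Q → Q = P ∨ Q = ⊤ := by
  let e := OrderIso.setIsotypicComponents (R := R) (M := R)
  obtain ⟨P, hP, hrP⟩ : ∃ P : fullyInvariantSubmodule R R, IsCoatom P ∧ r ∉ P.1 := by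
    by_contra! h
    have hr' : r ∈ (⨅ c, e {c}ᶜ : fullyInvariantSubmodule R R).1 := by
      rw [CompleteSublattice.coe_iInf, Submodule.mem_iInf]
      exact fun c => h _ ((e.isCoatom_iff _).mpr (Set.isCoatom_singleton_compl c))
    rw [← e.map_iInf, show (⨅ c, {c}ᶜ : Set (isotypicComponents R R)) = ⊥ by ext; simp,
      e.map_bot] at hr'
    exact hr hr'
  refine ⟨P.1, isFullyInvariant_iff_isTwoSided.mp P.2, fun h => hP.1 (Subtype.ext h), hrP, ?_⟩
  intro Q hQ hPQ
  let Q' : fullyInvariantSubmodule R R := ⟨Q, isFullyInvariant_iff_isTwoSided.mpr hQ⟩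
  rcases hP.le_iff.mp (show P ≤ Q' from hPQ) with h | h
  · exact .inr (congrArg Subtype.val h)
  · exact .inl (congrArg Subtype.val h)

theorem exists_maximal_isTwoSided_comap {R S : Type*} [Ring R] [Ring S] (f : R →+* S)
    (hf : Function.Surjective f) {r : R}
    (h : ∃ P : Ideal S, P.IsTwoSided ∧ P ≠ ⊤ ∧ f r ∉ P ∧
      ∀ Q : Ideal S, Q.IsTwoSided → P ≤ Q → Q = P ∨ Q = ⊤) :
    ∃ P : Ideal R, RingHom.ker f ≤ P ∧ P.IsTwoSided ∧ P ≠ ⊤ ∧ r ∉ P ∧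
      ∀ Q : Ideal R, Q.IsTwoSided → P ≤ Q → Q = P ∨ Q = ⊤ := by
  obtain ⟨P, hP, hPtop, hrP, hmax⟩ := h
  refine ⟨P.comap f, Ideal.comap_mono bot_le, inferInstance, ?_, hrP, fun Q hQ hPQ => ?_⟩
  · rwa [Ne, Ideal.comap_eq_top_iff]
  have hQf : (Q.map f).comap f = Q := by
    rw [Ideal.comap_map_of_surjective f hf, sup_eq_left]
    exact (Ideal.comap_mono bot_le).trans hPQ
  have hmapQ : (Q.map f).IsTwoSided := ⟨fun {a} b ha => by
    obtain ⟨x, hx, rfl⟩ := (Ideal.mem_map_iff_of_surjective f hf).mp ha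
    obtain ⟨y, rfl⟩ := hf b
    rw [← map_mul]
    exact Ideal.mem_map_of_mem f (Q.mul_mem_right y hx)⟩
  rcases hmax (Q.map f) hmapQ (by
    rw [← Ideal.map_comap_of_surjective f hf P]; exact Ideal.map_mono hPQ) with h | h
  · exact .inl (by rw [← hQf, h])
  · exact .inr (by rw [← hQf, h, Ideal.comap_top])

theorem exists_maximal_isTwoSided_notMem_of_isArtinianRing {R : Type*} [Ring R]
    [IsArtinianRing R] {r : R} (hr : r ∉ Ring.jacobson R) :
    ∃ P : Ideal R, P.IsTwoSided ∧ P ≠ ⊤ ∧ r ∉ P ∧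
      ∀ Q : Ideal R, Q.IsTwoSided → P ≤ Q → Q = P ∨ Q = ⊤ := by
  obtain ⟨P, -, h⟩ := exists_maximal_isTwoSided_comap (Ideal.Quotient.mk (Ring.jacobson R))
    Ideal.Quotient.mk_surjective (r := r)
    (exists_maximal_isTwoSided_notMem_of_isSemisimpleRing
      (fun h => hr (Ideal.Quotient.eq_zero_iff_mem.mp h)))
  exact ⟨P, h⟩

theorem Subring.exists_sub_mem_pow {R : Type*} [Ring R] (S : Subring R) (J : Ideal R)
    [J.IsTwoSided]
    (h : ∀ r, ∃ s ∈ S, r - s ∈ J ^ 2) (n : ℕ) (r : R) : ∃ s ∈ S, r - s ∈ J ^ (n + 2) := by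
  induction n generalizing r with
  | zero => exact h r
  | succ n ih =>
    have key : ∀ u ∈ J ^ (n + 2), ∃ s ∈ S, u - s ∈ J ^ (n + 1 + 2) := by
      intro u hu
      rw [add_comm n 2, show 2 + n = (n + 1) + 1 by omega, Ideal.IsTwoSided.pow_succ] at hu
      refine Submodule.smul_induction_on hu (fun x hx y hy => ?_) fun x y hx hy => ?_
      · obtain ⟨s, hs, hxs⟩ := ih x
        obtain ⟨t, ht, hyt⟩ := ih y
        refine ⟨s * t, S.mul_mem hs ht, ?_⟩
        have hsJ : s ∈ J := by
          have := J.sub_mem hx (Ideal.pow_le_self (by omega) hxs)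
          rwa [sub_sub_cancel] at this
        rw [smul_eq_mul, show x * y - s * t = (x - s) * y + s * (y - t) by noncomm_ring]
        refine Ideal.add_mem _ ?_ ?_
        · have := Ideal.mul_mem_mul hxs hy
          rw [← Ideal.IsTwoSided.pow_add] at this
          exact Ideal.pow_le_pow_right (by omega) this
        · have := Ideal.mul_mem_mul hsJ hyt
          rw [← Ideal.IsTwoSided.pow_succ] at this
          exact Ideal.pow_le_pow_right (by omega) this
      · obtain ⟨s, hs, hxs⟩ := hx
        obtain ⟨t, ht, hyt⟩ := hy
        refine ⟨s + t, S.add_mem hs ht, ?_⟩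
        rw [add_sub_add_comm]
        exact Ideal.add_mem _ hxs hyt
    obtain ⟨s, hs, hrs⟩ := ih r
    obtain ⟨t, ht, hut⟩ := key _ hrs
    exact ⟨s + t, S.add_mem hs ht, by rwa [← sub_sub]⟩

theorem Subring.eq_top_of_exists_sub_mem_sq {R : Type*} [Ring R] (S : Subring R) {J : Ideal R}
    [J.IsTwoSided] (hJ : IsNilpotent J) (h : ∀ r, ∃ s ∈ S, r - s ∈ J ^ 2) : S = ⊤ := by
  obtain ⟨n, hn⟩ := hJ
  refine eq_top_iff.mpr fun r _ => ?_
  obtain ⟨s, hs, hrs⟩ := S.exists_sub_mem_pow J h n r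
  rw [Ideal.IsTwoSided.pow_add, hn, zero_mul, Ideal.zero_eq_bot, Ideal.mem_bot,
    sub_eq_zero] at hrs
  rwa [hrs]

section LinearAlgebra

variable {k C}

omit [Coalgebra k C]

theorem TensorProduct.eq_zero_of_forall_mul'_map {V W : Type*} [AddCommGroup V] [Module k V]
    [AddCommGroup W] [Module k W] {t : V ⊗[k] W}
    (h : ∀ (a : V →ₗ[k] k) (b : W →ₗ[k] k), LinearMap.mul' k k (map a b t) = 0) : t = 0 := by
  let v := Module.Basis.ofVectorSpace k V
  let w := Module.Basis.ofVectorSpace k W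
  refine (v.tensorProduct w).ext_elem fun ⟨i, j⟩ => ?_
  have hcoord : (v.tensorProduct w).coord (i, j) =
      LinearMap.mul' k k ∘ₗ map (v.coord i) (w.coord j) := by
    ext x y
    simp [mul_comm]
  have := LinearMap.congr_fun hcoord t
  simpa [h] using this

theorem TensorProduct.map_sub_left {V W V' W' : Type*} [AddCommGroup V] [Module k V]
    [AddCommGroup W] [Module k W] [AddCommGroup V'] [Module k V'] [AddCommGroup W'] [Module k W']
    (f g : V →ₗ[k] V') (h : W →ₗ[k] W') : map (f - g) h = map f h - map g h := by
  ext
  simp [sub_tmul]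

theorem TensorProduct.map_sub_right {V W V' W' : Type*} [AddCommGroup V] [Module k V]
    [AddCommGroup W] [Module k W] [AddCommGroup V'] [Module k V'] [AddCommGroup W'] [Module k W']
    (f : V →ₗ[k] V') (g h : W →ₗ[k] W') : map f (g - h) = map f g - map f h := by
  ext
  simp [tmul_sub]

theorem Submodule.exists_projection {V : Type*} [AddCommGroup V] [Module k V]
    (U : Submodule k V) : ∃ p : V →ₗ[k] V, (∀ x, p x ∈ U) ∧ ∀ x ∈ U, p x = x := by
  obtain ⟨q, hq⟩ := U.subtype.exists_leftInverse_of_injective U.ker_subtype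
  exact ⟨U.subtype ∘ₗ q, fun x => (q x).2,
    fun x hx => congrArg Subtype.val (LinearMap.congr_fun hq ⟨x, hx⟩)⟩

theorem map_mem_tensorSub {U W : Submodule k C} {p q : C →ₗ[k] C} (hp : ∀ x, p x ∈ U)
    (hq : ∀ x, q x ∈ W) (t : C ⊗[k] C) : TensorProduct.map p q t ∈ tensorSub k C U W := by
  refine ⟨TensorProduct.map (p.codRestrict U hp) (q.codRestrict W hq) t, ?_⟩
  rw [← LinearMap.comp_apply, ← TensorProduct.map_comp]
  rfl

theorem mul'_map_eq_zero_of_mem_tensorSub {U W : Submodule k C} {a b : C →ₗ[k] k}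
    (h : (∀ x ∈ U, a x = 0) ∨ ∀ x ∈ W, b x = 0) {t : C ⊗[k] C} (ht : t ∈ tensorSub k C U W) :
    LinearMap.mul' k k (TensorProduct.map a b t) = 0 := by
  obtain ⟨t, rfl⟩ := ht
  induction t with
  | zero => simp
  | tmul x y =>
    rcases h with h | h
    · simp [h x x.2]
    · simp [h y y.2]
  | add x y hx hy => simp only [map_add, hx, hy, add_zero]

theorem map_eq_zero_of_forall_mul'_map {t : C ⊗[k] C} {f g : C →ₗ[k] C}
    (h : ∀ a b : C →ₗ[k] k, LinearMap.mul' k k (TensorProduct.map (a ∘ₗ f) (b ∘ₗ g) t) = 0) :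
    TensorProduct.map f g t = 0 := by
  refine TensorProduct.eq_zero_of_forall_mul'_map fun a b => ?_
  rw [← LinearMap.comp_apply (TensorProduct.map a b), ← TensorProduct.map_comp]
  exact h a b

theorem mem_tensorSub_sup_tensorSub {U W : Submodule k C} {t : C ⊗[k] C}
    (h : ∀ a b : C →ₗ[k] k, (∀ x ∈ U, a x = 0) → (∀ x ∈ W, b x = 0) →
      LinearMap.mul' k k (TensorProduct.map a b t) = 0) :
    t ∈ tensorSub k C ⊤ W ⊔ tensorSub k C U ⊤ := by
  obtain ⟨p, hpU, hp⟩ := U.exists_projection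
  obtain ⟨q, hqW, hq⟩ := W.exists_projection
  have key : TensorProduct.map (LinearMap.id - p) (LinearMap.id - q) t = 0 :=
    map_eq_zero_of_forall_mul'_map fun a b =>
      h _ _ (fun x hx => by simp [hp x hx]) (fun x hx => by simp [hq x hx])
  rw [map_sub_left, LinearMap.sub_apply, sub_eq_zero, map_sub_right, LinearMap.sub_apply,
    TensorProduct.map_id, LinearMap.id_apply, sub_eq_iff_eq_add'] at key
  rw [key]
  exact Submodule.add_mem_sup (map_mem_tensorSub (fun _ => Submodule.mem_top) hqW t)
    (map_mem_tensorSub hpU (fun _ => Submodule.mem_top) t)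

theorem mem_tensorSub_self {U : Submodule k C} {t : C ⊗[k] C}
    (h : ∀ a b : C →ₗ[k] k, (∀ x ∈ U, a x = 0) →
      LinearMap.mul' k k (TensorProduct.map a b t) = 0)
    (h' : ∀ a b : C →ₗ[k] k, (∀ x ∈ U, b x = 0) →
      LinearMap.mul' k k (TensorProduct.map a b t) = 0) :
    t ∈ tensorSub k C U U := by
  obtain ⟨p, hpU, hp⟩ := U.exists_projection
  have hl : TensorProduct.map (LinearMap.id - p) LinearMap.id t = 0 :=
    map_eq_zero_of_forall_mul'_map fun a b => h _ _ (fun x hx => by simp [hp x hx])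
  have hr : TensorProduct.map p (LinearMap.id - p) t = 0 :=
    map_eq_zero_of_forall_mul'_map fun a b => h' _ _ (fun x hx => by simp [hp x hx])
  rw [map_sub_left, LinearMap.sub_apply, TensorProduct.map_id, LinearMap.id_apply,
    sub_eq_zero] at hl
  rw [map_sub_right, LinearMap.sub_apply, sub_eq_zero, ← hl] at hr
  rw [hr]
  exact map_mem_tensorSub hpU hpU t

end LinearAlgebra

section DualAlgebra

open WithConv

variable {k C}

/-- The elements of `C` annihilated by an ideal of the convolution algebra `C →ₗ[k] k`. -/
def coann (I : Ideal (WithConv (C →ₗ[k] k))) : Submodule k C where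
  carrier := {x | ∀ a ∈ I, a x = 0}
  add_mem' hx hy a ha := by rw [map_add, hx a ha, hy a ha, add_zero]
  zero_mem' a _ := map_zero _
  smul_mem' c x hx a ha := by rw [map_smul, hx a ha, smul_zero]

/-- The functionals that vanish on a subcoalgebra form a two-sided ideal. -/
def annIdeal (F : Submodule k C) (hF : IsSubcoalgebra k C F) : Ideal (WithConv (C →ₗ[k] k)) where
  carrier := {a | ∀ x ∈ F, a x = 0}
  add_mem' ha hb x hx := by simp [ha x hx, hb x hx]
  zero_mem' x _ := by simp
  smul_mem' _ a ha x hx := mul'_map_eq_zero_of_mem_tensorSub (.inr ha) (hF x hx)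

theorem isTwoSided_annIdeal (F : Submodule k C) (hF : IsSubcoalgebra k C F) :
    (annIdeal F hF).IsTwoSided :=
  ⟨fun _ ha x hx => mul'_map_eq_zero_of_mem_tensorSub (.inl ha) (hF x hx)⟩

theorem mem_of_forall_mem_coann {I : Ideal (WithConv (C →ₗ[k] k))} {E : Submodule k C}
    [FiniteDimensional k E] (hE : ∀ a : WithConv (C →ₗ[k] k), (∀ x ∈ E, a x = 0) → a ∈ I)
    {a : WithConv (C →ₗ[k] k)} (ha : ∀ x ∈ coann I, a x = 0) : a ∈ I := by
  let r : WithConv (C →ₗ[k] k) →ₗ[k] Module.Dual k E :=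
    E.subtype.dualMap ∘ₗ (WithConv.linearEquiv k (C →ₗ[k] k)).toLinearMap
  let W : Submodule k (Module.Dual k E) := (I.restrictScalars k).map r
  have haW : r a ∈ W := by
    have : FiniteDimensional k W := FiniteDimensional.finiteDimensional_submodule W
    rw [← Subspace.dualCoannihilator_dualAnnihilator_eq (W := W),
      Submodule.mem_dualAnnihilator]
    intro x hx
    refine ha x fun b hb => ?_
    exact (Submodule.mem_dualCoannihilator x).mp hx _ ⟨b, hb, rfl⟩
  obtain ⟨b, hb, hab⟩ := haW
  have : a - b ∈ I := hE _ fun x hx => by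
    have := LinearMap.congr_fun hab ⟨x, hx⟩
    exact sub_eq_zero.mpr this.symm
  simpa using I.add_mem this hb

theorem isSubcoalgebra_coann {I : Ideal (WithConv (C →ₗ[k] k))} [I.IsTwoSided]
    (hI : ∀ a : WithConv (C →ₗ[k] k), (∀ x ∈ coann I, a x = 0) → a ∈ I) :
    IsSubcoalgebra k C (coann I) := fun _ hx =>
  mem_tensorSub_self
    (fun a b ha => hx (toConv a * toConv b) (I.mul_mem_right _ (hI (toConv a) ha)))
    (fun a b hb => hx (toConv a * toConv b) (I.mul_mem_left _ (hI (toConv b) hb)))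

theorem coann_le_coradical {I : Ideal (WithConv (C →ₗ[k] k))} [I.IsTwoSided] (hne : I ≠ ⊤)
    (hmax : ∀ Q : Ideal (WithConv (C →ₗ[k] k)), Q.IsTwoSided → I ≤ Q → Q = I ∨ Q = ⊤)
    (hI : ∀ a : WithConv (C →ₗ[k] k), (∀ x ∈ coann I, a x = 0) → a ∈ I) :
    coann I ≤ coradical k C := by
  refine le_sSup ⟨isSubcoalgebra_coann hI, fun h => hne ?_, fun F hF hFsub => ?_⟩
  · refine eq_top_iff.mpr fun a _ => hI a fun x hx => ?_
    rw [h, Submodule.mem_bot] at hx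
    rw [hx, map_zero]
  have hdual : ∀ x, (∀ a ∈ annIdeal F hFsub, a x = 0) → x ∈ F := fun x hx => by
    by_contra hxF
    obtain ⟨φ, hφ, hφF⟩ := Submodule.exists_le_ker_of_notMem hxF
    exact hφ (hx (toConv φ) fun y hy => hφF hy)
  rcases hmax (annIdeal F hFsub) (isTwoSided_annIdeal F hFsub)
    (fun a ha x hx => hF hx a ha) with h | h
  · right
    refine le_antisymm hF fun x hx => hdual x ?_
    rw [h]
    exact hx
  · left
    refine (Submodule.eq_bot_iff F).mpr fun x hx => ?_
    refine (Module.forall_dual_apply_eq_zero_iff k x).mp fun φ => ?_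
    have hφ : toConv φ ∈ annIdeal F hFsub := h ▸ Submodule.mem_top
    exact hφ x hx

theorem exists_finiteDimensional_middle {V : Type*} [AddCommGroup V] [Module k V]
    (t : V ⊗[k] (V ⊗[k] V)) : ∃ E : Submodule k V, FiniteDimensional k E ∧
      ∀ a : V →ₗ[k] k, (∀ x ∈ E, a x = 0) → ∀ b c : V →ₗ[k] k,
        TensorProduct.map b (LinearMap.mul' k k ∘ₗ TensorProduct.map a c) t = 0 := by
  induction t with
  | zero => exact ⟨⊥, inferInstance, by simp⟩
  | add s t hs ht =>
    obtain ⟨E, _, hE⟩ := hs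
    obtain ⟨F, _, hF⟩ := ht
    refine ⟨E ⊔ F, inferInstance, fun a ha b c => ?_⟩
    rw [map_add, hE a (fun x hx => ha x (Submodule.mem_sup_left hx)),
      hF a (fun x hx => ha x (Submodule.mem_sup_right hx)), add_zero]
  | tmul x u =>
    induction u with
    | zero => exact ⟨⊥, inferInstance, by simp⟩
    | add s t hs ht =>
      obtain ⟨E, _, hE⟩ := hs
      obtain ⟨F, _, hF⟩ := ht
      refine ⟨E ⊔ F, inferInstance, fun a ha b c => ?_⟩
      rw [TensorProduct.tmul_add, map_add, hE a (fun x hx => ha x (Submodule.mem_sup_left hx)),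
        hF a (fun x hx => ha x (Submodule.mem_sup_right hx)), add_zero]
    | tmul y z =>
      refine ⟨k ∙ y, inferInstance, fun a ha b c => ?_⟩
      simp [ha y (Submodule.mem_span_singleton_self y)]

/-- The annihilator of the subcoalgebra generated by `x`. -/
def annGenerated (x : C) : Ideal (WithConv (C →ₗ[k] k)) where
  carrier := {a | ∀ b c : WithConv (C →ₗ[k] k), (b * (a * c)) x = 0}
  add_mem' {a a'} ha ha' b c := by
    rw [add_mul, mul_add, ofConv_add, LinearMap.add_apply, ha, ha', add_zero]
  zero_mem' b c := by simp
  smul_mem' d a ha b c := by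
    rw [smul_eq_mul, mul_assoc, ← mul_assoc b d]
    exact ha _ _

instance isTwoSided_annGenerated (x : C) : (annGenerated (k := k) x).IsTwoSided :=
  ⟨fun d ha b c => by rw [mul_assoc]; exact ha _ _⟩

theorem apply_eq_zero_of_mem_annGenerated {x : C} {a : WithConv (C →ₗ[k] k)}
    (ha : a ∈ annGenerated (k := k) x) : a x = 0 := by
  simpa only [one_mul, mul_one] using ha 1 1

theorem exists_finiteDimensional_annGenerated (x : C) :
    ∃ E : Submodule k C, FiniteDimensional k E ∧
      ∀ a : WithConv (C →ₗ[k] k), (∀ y ∈ E, a y = 0) → a ∈ annGenerated (k := k) x := by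
  obtain ⟨E, hE, h⟩ := exists_finiteDimensional_middle (k := k)
    ((Coalgebra.comul (R := k)).lTensor C (Coalgebra.comul (R := k) x))
  refine ⟨E, hE, fun a ha b c => ?_⟩
  have := h a.ofConv ha b.ofConv c.ofConv
  rw [← LinearMap.comp_apply, LinearMap.map_comp_lTensor, LinearMap.comp_assoc] at this
  rw [LinearMap.convMul_apply, LinearMap.convMul_def, ofConv_toConv, this, map_zero]

theorem finite_quotient_of_forall_mem {I : Ideal (WithConv (C →ₗ[k] k))} [I.IsTwoSided]
    {E : Submodule k C} [FiniteDimensional k E]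
    (hE : ∀ a : WithConv (C →ₗ[k] k), (∀ x ∈ E, a x = 0) → a ∈ I) :
    Module.Finite k (WithConv (C →ₗ[k] k) ⧸ I) := by
  obtain ⟨p, hpE, hp⟩ := E.exists_projection
  let q : C →ₗ[k] E := p.codRestrict E hpE
  refine Module.Finite.of_surjective ((Ideal.Quotient.mkₐ k I).toLinearMap ∘ₗ
    (WithConv.linearEquiv k (C →ₗ[k] k)).symm.toLinearMap ∘ₗ q.dualMap) fun r => ?_
  obtain ⟨a, rfl⟩ := Ideal.Quotient.mk_surjective r
  refine ⟨a.ofConv ∘ₗ E.subtype, Ideal.Quotient.eq.mpr (hE _ fun x hx => ?_)⟩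
  change a (p x) - a x = 0
  rw [hp x hx, sub_self]

theorem mk_mem_jacobson {N : Ideal (WithConv (C →ₗ[k] k))} [N.IsTwoSided]
    {E : Submodule k C} [FiniteDimensional k E]
    (hE : ∀ a : WithConv (C →ₗ[k] k), (∀ x ∈ E, a x = 0) → a ∈ N)
    {a : WithConv (C →ₗ[k] k)} (ha : ∀ x ∈ coradical k C, a x = 0) :
    Ideal.Quotient.mk N a ∈ Ring.jacobson (WithConv (C →ₗ[k] k) ⧸ N) := by
  have := finite_quotient_of_forall_mem hE
  have : IsArtinianRing (WithConv (C →ₗ[k] k) ⧸ N) := .of_finite k _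
  by_contra hr
  obtain ⟨P, hNP, hP, hPtop, haP, hmax⟩ := exists_maximal_isTwoSided_comap
    (Ideal.Quotient.mk N) Ideal.Quotient.mk_surjective
    (exists_maximal_isTwoSided_notMem_of_isArtinianRing hr)
  rw [Ideal.mk_ker] at hNP
  have hclosed : ∀ b : WithConv (C →ₗ[k] k), (∀ x ∈ coann P, b x = 0) → b ∈ P := fun b hb =>
    mem_of_forall_mem_coann (fun c hc => hNP (hE c hc)) hb
  exact haP (hclosed a fun x hx => ha x (coann_le_coradical hPtop hmax hclosed hx))

theorem mk_mem_jacobson_sq {N : Ideal (WithConv (C →ₗ[k] k))} [N.IsTwoSided]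
    {E : Submodule k C} [FiniteDimensional k E]
    (hE : ∀ a : WithConv (C →ₗ[k] k), (∀ x ∈ E, a x = 0) → a ∈ N)
    {a : WithConv (C →ₗ[k] k)} (ha : ∀ x ∈ coradFilt k C 1, a x = 0) :
    Ideal.Quotient.mk N a ∈ Ring.jacobson (WithConv (C →ₗ[k] k) ⧸ N) ^ 2 := by
  change a ∈ (Ring.jacobson (WithConv (C →ₗ[k] k) ⧸ N) ^ 2).comap (Ideal.Quotient.mk N)
  refine mem_of_forall_mem_coann (E := E) (fun b hb => ?_) fun x hx => ha x ?_
  · rw [Ideal.mem_comap, Ideal.Quotient.eq_zero_iff_mem.mpr (hE b hb)]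
    exact zero_mem _
  · refine mem_tensorSub_sup_tensorSub fun b c hb hc => ?_
    refine hx (toConv b * toConv c) ?_
    rw [Ideal.mem_comap, map_mul, Ideal.IsTwoSided.pow_succ, Submodule.pow_one]
    exact Ideal.mul_mem_mul (mk_mem_jacobson hE hb)
      (mk_mem_jacobson hE hc)

/-- The functionals on `C` that factor through a coalgebra morphism `f : C → D`. -/
def dualRange {D : Type*} [AddCommGroup D] [Module k D] [Coalgebra k D] (f : C →ₗc[k] D) :
    Subring (WithConv (C →ₗ[k] k)) where
  carrier := Set.range fun b : WithConv (D →ₗ[k] k) => toConv (b.ofConv ∘ₗ f.toLinearMap)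
  mul_mem' := by
    rintro _ _ ⟨a, rfl⟩ ⟨b, rfl⟩
    exact ⟨a * b, congrArg toConv (LinearMap.convMul_comp_coalgHom_distrib a b f)⟩
  one_mem' := ⟨1, by ext; simp⟩
  add_mem' := by
    rintro _ _ ⟨a, rfl⟩ ⟨b, rfl⟩
    exact ⟨a + b, rfl⟩
  zero_mem' := ⟨0, rfl⟩
  neg_mem' := by
    rintro _ ⟨a, rfl⟩
    exact ⟨-a, rfl⟩

theorem exists_factor_of_injOn {D : Type*} [AddCommGroup D] [Module k D] [Coalgebra k D]
    (f : C →ₗc[k] D) {U : Submodule k C} (hf : Set.InjOn f U) (a : WithConv (C →ₗ[k] k)) :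
    ∃ b ∈ dualRange f, ∀ x ∈ U, (a - b) x = 0 := by
  obtain ⟨g, hg⟩ := (f.toLinearMap ∘ₗ U.subtype).exists_leftInverse_of_injective
    (LinearMap.ker_eq_bot.mpr fun y z hyz => Subtype.ext (hf y.2 z.2 hyz))
  refine ⟨_, ⟨toConv (a.ofConv ∘ₗ U.subtype ∘ₗ g), rfl⟩, fun y hy => ?_⟩
  have hgy : g (f y) = ⟨y, hy⟩ := LinearMap.congr_fun hg ⟨y, hy⟩
  change a y - a (g (f y) : C) = 0
  rw [hgy, sub_self]

theorem map_mk_dualRange_eq_top {D : Type*} [AddCommGroup D] [Module k D] [Coalgebra k D]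
    {f : C →ₗc[k] D} (hf : Set.InjOn f (coradFilt k C 1))
    {N : Ideal (WithConv (C →ₗ[k] k))} [N.IsTwoSided] {E : Submodule k C} [FiniteDimensional k E]
    (hE : ∀ a : WithConv (C →ₗ[k] k), (∀ x ∈ E, a x = 0) → a ∈ N) :
    (dualRange f).map (Ideal.Quotient.mk N) = ⊤ := by
  have := finite_quotient_of_forall_mem hE
  have : IsArtinianRing (WithConv (C →ₗ[k] k) ⧸ N) := .of_finite k _
  refine Subring.eq_top_of_exists_sub_mem_sq _
    (J := Ring.jacobson (WithConv (C →ₗ[k] k) ⧸ N)) IsSemiprimaryRing.isNilpotent fun r => ?_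
  obtain ⟨a, rfl⟩ := Ideal.Quotient.mk_surjective r
  obtain ⟨b, hb, hab⟩ := exists_factor_of_injOn f hf a
  refine ⟨_, ⟨b, hb, rfl⟩, ?_⟩
  have := mk_mem_jacobson_sq hE hab
  rwa [map_sub] at this

end DualAlgebra

/-- Heyneman–Radford: a coalgebra morphism `f : C → D` is injective
iff its restriction to the first term `C_(1)` of the coradical filtration is injective. -/
theorem coalgHom_injective_iff_injOn_coradFilt_one
    (D : Type*) [AddCommGroup D] [Module k D] [Coalgebra k D]
    (f : C →ₗc[k] D) :
    Function.Injective f ↔ Set.InjOn f (coradFilt k C 1) := by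
  refine ⟨fun h => h.injOn, fun hinj => ?_⟩
  refine (injective_iff_map_eq_zero f).mpr fun x hx => ?_
  obtain ⟨E, _, hE⟩ := exists_finiteDimensional_annGenerated (k := k) x
  refine (Module.forall_dual_apply_eq_zero_iff k x).mp fun φ => ?_
  obtain ⟨_, ⟨b, rfl⟩, hb⟩ : Ideal.Quotient.mk (annGenerated (k := k) x) (WithConv.toConv φ) ∈
      (dualRange f).map (Ideal.Quotient.mk (annGenerated (k := k) x)) :=
    map_mk_dualRange_eq_top hinj hE ▸ Subring.mem_top _
  have h := apply_eq_zero_of_mem_annGenerated (Ideal.Quotient.eq.mp hb)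
  change b (f x) - φ x = 0 at h
  rwa [hx, map_zero, zero_sub, neg_eq_zero] at h
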